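/- Let F : ℂ → ℂ be entire with F ≢ 0, and let γ : ℝ → ℂ be a solution of ẋ = F(x) whose image is bounded and which is not periodic (there is no T > 0 with γ(t + T) = γ(t) for all t ∈ ℝ). Then γ is homoclinic or heteroclinic: there exist a, b ∈ ℂ with F(a) = 0 and F(b) = 0 such that γ(t) → a as t → ∞ and γ(t) → b as t → −∞. -/

import Mathlib

open Set Filter Topology

/-!
A solution `γ` whose image lies in a compact subset of the domain of `F` extends holomorphically,
as a bounded solution `Γ` in complex time, to a strip `|Im z| < δ`, because the complex Picard
iteration converges on discs of a radius that is uniform over compact sets. If `γ` accumulated at a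
point `p` with `F p ≠ 0`, the complex orbit through `p` would cover a neighbourhood of `p`, so `γ`
would return to that single orbit at two times far apart, and comparing the two passages gives a
period `τ` of `Γ`. Either `τ` is real, and `γ` is periodic, or its imaginary part lets `Γ` be
continued to a bounded entire function, which is constant by Liouville. Hence all limit points of
a nonperiodic `γ` are zeros of `F`. Such a zero is isolated, since otherwise `F` would vanish near
it and `γ` would be constant, and a connected limit set of isolated points is a single point.
-/

section Topology

lemma exists_eqOn_of_eqOn_inter {ι X Y : Type*} [Nonempty Y] {D : ι → Set X} {f : ι → X → Y}
    (h : ∀ i j, EqOn (f i) (f j) (D i ∩ D j)) : ∃ g : X → Y, ∀ i, EqOn g (f i) (D i) := by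
  have hvalue : ∀ x, ∃ y, ∀ i, x ∈ D i → y = f i x := fun x => by
    by_cases hx : ∃ i, x ∈ D i
    · obtain ⟨i, hi⟩ := hx
      exact ⟨f i x, fun j hj => h i j ⟨hi, hj⟩⟩
    · exact ⟨Classical.arbitrary Y, fun i hi => absurd ⟨i, hi⟩ hx⟩
  choose g hg using hvalue
  exact ⟨g, fun i x hx => hg x i hx⟩

lemma exists_tendstoUniformlyOn_of_dist_le_geometric {X Y : Type*} [PseudoMetricSpace Y]
    [CompleteSpace Y] [Nonempty Y] {u : ℕ → X → Y} {s : Set X} {C q : ℝ} (hq₀ : 0 ≤ q)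
    (hq₁ : q < 1) (hu : ∀ n, ∀ x ∈ s, dist (u n x) (u (n + 1) x) ≤ C * q ^ n) :
    ∃ g : X → Y, TendstoUniformlyOn u g atTop s := by
  have hlim : ∀ x, ∃ y, x ∈ s → Tendsto (fun n => u n x) atTop (𝓝 y) := fun x => by
    by_cases hx : x ∈ s
    · obtain ⟨y, hy⟩ := cauchySeq_tendsto_of_complete
        (cauchySeq_of_le_geometric q C hq₁ fun n => hu n x hx)
      exact ⟨y, fun _ => hy⟩
    · exact ⟨Classical.arbitrary Y, fun h => absurd h hx⟩
  choose g hg using hlim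
  refine ⟨g, Metric.tendstoUniformlyOn_iff.2 fun ε hε => ?_⟩
  have hbound : Tendsto (fun n => C * q ^ n / (1 - q)) atTop (𝓝 0) := by
    simpa using ((tendsto_pow_atTop_nhds_zero_of_lt_one hq₀ hq₁).const_mul C).div_const (1 - q)
  filter_upwards [hbound.eventually_lt_const hε] with n hn x hx
  rw [dist_comm]
  exact (dist_le_of_le_geometric_of_tendsto q C hq₁ (fun n => hu n x hx) (hg x hx) n).trans_lt hn

/-- A curve in a compact set that keeps returning near `a` without converging to `a` crosses small
spheres around `a` arbitrarily late, and so has further cluster points on them. -/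
theorem tendsto_of_mapClusterPt_of_isolated {ι X : Type*} [ConditionallyCompleteLinearOrder ι]
    [TopologicalSpace ι] [OrderTopology ι] [DenselyOrdered ι] [Nonempty ι] [MetricSpace X]
    {f : ι → X} {K : Set X} {a : X} (hf : Continuous f) (hK : IsCompact K) (hfK : ∀ t, f t ∈ K)
    (ha : MapClusterPt a atTop f) (hiso : ∀ᶠ q in 𝓝[≠] a, ¬ MapClusterPt q atTop f) :
    Tendsto f atTop (𝓝 a) := by
  obtain ⟨ε, hε, hiso⟩ := Metric.eventually_nhds_iff.1 (eventually_nhdsWithin_iff.1 hiso)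
  refine Metric.tendsto_nhds.2 fun ε' hε' => ?_
  by_contra hfar
  obtain ⟨r, hr, hrε⟩ := exists_between (lt_min hε hε')
  have hnear : ∃ᶠ t in atTop, f t ∈ Metric.ball a r := ha.frequently (Metric.ball_mem_nhds a hr)
  have hsphere : ∃ᶠ t in atTop, f t ∈ K ∩ Metric.sphere a r := by
    rw [not_eventually] at hfar
    rw [frequently_atTop] at hnear hfar ⊢
    intro T
    obtain ⟨t₁, ht₁, h₁⟩ := hnear T
    obtain ⟨t₂, ht₂, h₂⟩ := hfar T
    obtain ⟨t, ht, hrt⟩ := intermediate_value_uIcc (hf.dist continuous_const).continuousOn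
      (mem_uIcc.2 (.inl ⟨(Metric.mem_ball.1 h₁).le,
        (hrε.trans_le (min_le_right _ _)).le.trans (not_lt.1 h₂)⟩))
    exact ⟨t, (le_min ht₁ ht₂).trans ht.1, hfK t, hrt⟩
  obtain ⟨q, ⟨-, hq⟩, hcluster⟩ :=
    (hK.inter_right Metric.isClosed_sphere).exists_mapClusterPt_of_frequently hsphere
  have hqr : dist q a = r := hq
  exact hiso (hqr.trans_lt (hrε.trans_le (min_le_left _ _))) (dist_pos.1 (hqr ▸ hr)) hcluster

end Topology

section Lipschitz

lemma exists_lipschitzOnWith_of_contDiffOn {𝕜 E G : Type*} [RCLike 𝕜] [NormedAddCommGroup E]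
    [NormedSpace 𝕜 E] [NormedAddCommGroup G] [NormedSpace 𝕜 G] {F : E → G} {U K : Set E}
    (hF : ContDiffOn 𝕜 1 F U) (hU : IsOpen U) (hK : IsCompact K) (hKU : K ⊆ U) :
    ∃ L : NNReal, LipschitzOnWith L F K := by
  refine LocallyLipschitzOn.exists_lipschitzOnWith_of_compact hK fun x hx => ?_
  obtain ⟨L, t, ht, hL⟩ := (hF.contDiffAt (hU.mem_nhds (hKU hx))).exists_lipschitzOnWith
  exact ⟨L, t, mem_nhdsWithin_of_mem_nhds ht, hL⟩

lemma eq_of_apply_eq_zero {E : Type*} [NormedAddCommGroup E] [NormedSpace ℝ E] {F : E → E}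
    {S : Set E} {L : NNReal} (hL : LipschitzOnWith L F S) {γ : ℝ → E}
    (hγ : ∀ t, HasDerivAt γ (F (γ t)) t) (hγS : ∀ t, γ t ∈ S) {t₀ : ℝ} (h : F (γ t₀) = 0)
    (t : ℝ) : γ t = γ t₀ := by
  refine congrFun (ODE_solution_unique_univ (v := fun _ => F) (s := fun _ => S) (t₀ := t₀)
    (g := fun _ => γ t₀) (fun _ => hL) (fun s => ⟨hγ s, hγS s⟩) (fun s => ⟨?_, hγS t₀⟩) rfl) t
  rw [h]
  exact hasDerivAt_const s _

end Lipschitz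

section ComplexSolutions

variable {E : Type*} [NormedAddCommGroup E] [NormedSpace ℂ E]
  {F : E → E} {S T : Set E} {u v : ℂ → E} {D D' : Set ℂ}

/-- On the set `D` of complex times, `u` solves `u' = F ∘ u` and stays in `S`. The phase region `S`
is recorded because uniqueness and Liouville's theorem require Lipschitz and boundedness
information about `F` and `u` that is available only there. -/
def IsComplexSolutionOn (F : E → E) (S : Set E) (u : ℂ → E) (D : Set ℂ) : Prop :=
  ∀ z ∈ D, HasDerivAt u (F (u z)) z ∧ u z ∈ S

namespace IsComplexSolutionOn

lemma mono_domain (hu : IsComplexSolutionOn F S u D) (h : D' ⊆ D) :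
    IsComplexSolutionOn F S u D' :=
  fun z hz => hu z (h hz)

lemma mono_region (hu : IsComplexSolutionOn F S u D) (h : S ⊆ T) :
    IsComplexSolutionOn F T u D :=
  fun z hz => ⟨(hu z hz).1, h (hu z hz).2⟩

lemma congr (hu : IsComplexSolutionOn F S u D) (hD : IsOpen D) (h : EqOn v u D) :
    IsComplexSolutionOn F S v D := fun z hz => by
  have hz' := hu z hz
  rw [← h hz] at hz'
  exact ⟨hz'.1.congr_of_eventuallyEq (h.eventuallyEq_of_mem (hD.mem_nhds hz)), hz'.2⟩

lemma comp_add_const (hu : IsComplexSolutionOn F S u D) (c : ℂ) :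
    IsComplexSolutionOn F S (fun z => u (z + c)) ((· + c) ⁻¹' D) :=
  fun z hz => ⟨(hu _ hz).1.comp_add_const z c, (hu _ hz).2⟩

lemma differentiableOn (hu : IsComplexSolutionOn F S u D) : DifferentiableOn ℂ u D :=
  fun z hz => (hu z hz).1.differentiableAt.differentiableWithinAt

lemma hasDerivAt_comp_ofReal (hu : IsComplexSolutionOn F S u D) {t : ℝ} (ht : (t : ℂ) ∈ D) :
    HasDerivAt (fun s : ℝ => u s) (F (u t)) t := by
  have h := HasDerivAt.scomp t (hu _ ht).1 Complex.ofRealCLM.hasDerivAt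
  simpa [Function.comp_def] using h

/-- Uniqueness in real time makes `u` and `v` agree on a real segment through `z₀`, and the
identity theorem does the rest. -/
theorem eqOn_of_isPreconnected [CompleteSpace E] {L : NNReal} (hL : LipschitzOnWith L F S)
    (hD : IsOpen D) (hD' : IsPreconnected D) (hu : IsComplexSolutionOn F S u D)
    (hv : IsComplexSolutionOn F S v D) {z₀ : ℂ} (hz₀ : z₀ ∈ D) (h : u z₀ = v z₀) :
    EqOn u v D := by
  have hmem : ∀ᶠ t : ℝ in 𝓝 0, (t : ℂ) + z₀ ∈ D :=
    (by fun_prop : Continuous fun t : ℝ => (t : ℂ) + z₀).continuousAt.eventually_mem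
      (hD.mem_nhds (by simpa using hz₀))
  have hreal : ∀ w, IsComplexSolutionOn F S w D → ∀ᶠ t : ℝ in 𝓝 0,
      HasDerivAt (fun s : ℝ => w (s + z₀)) (F (w (t + z₀))) t ∧ w (t + z₀) ∈ S := fun w hw => by
    filter_upwards [hmem] with t ht
    exact ⟨(hw.comp_add_const z₀).hasDerivAt_comp_ofReal ht, (hw _ ht).2⟩
  have hseg : ∀ᶠ t : ℝ in 𝓝 0, u (t + z₀) = v (t + z₀) :=
    ODE_solution_unique_of_eventually (v := fun _ => F) (s := fun _ => S)
      (.of_forall fun _ => hL) (hreal u hu) (hreal v hv) (by simpa using h)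
  have hline : Tendsto (fun t : ℝ => (t : ℂ) + z₀) (𝓝[≠] 0) (𝓝[≠] z₀) := by
    refine tendsto_nhdsWithin_iff.2
      ⟨?_, eventually_mem_nhdsWithin.mono fun t ht => by simpa using ht⟩
    exact ((by fun_prop : Continuous fun t : ℝ => (t : ℂ) + z₀).tendsto' 0 z₀ (by simp)).mono_left
      nhdsWithin_le_nhds
  exact (hu.differentiableOn.analyticOnNhd hD).eqOn_of_preconnected_of_frequently_eq
    (hv.differentiableOn.analyticOnNhd hD) hD' hz₀
    (hline.frequently (hseg.filter_mono nhdsWithin_le_nhds).frequently)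

theorem apply_eq_of_real_solution {L : NNReal} (hL : LipschitzOnWith L F S) {γ : ℝ → E}
    (hγ : ∀ t, HasDerivAt γ (F (γ t)) t) (hγS : ∀ t, γ t ∈ S) {t₀ δ : ℝ}
    (hu : IsComplexSolutionOn F S u (Metric.ball t₀ δ)) (h : u t₀ = γ t₀) {t : ℝ}
    (ht : |t - t₀| < δ) : u t = γ t := by
  have hball : ∀ s ∈ Ioo (t₀ - δ) (t₀ + δ), (s : ℂ) ∈ Metric.ball (t₀ : ℂ) δ := fun s hs => by
    rw [← Real.ball_eq_Ioo] at hs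
    rwa [Metric.mem_ball, Complex.dist_of_im_eq (by simp)]
  have hδ : 0 < δ := (abs_nonneg _).trans_lt ht
  refine ODE_solution_unique_of_mem_Ioo (f := fun s : ℝ => u s) (v := fun _ => F)
    (s := fun _ => S) (fun _ _ => hL) (t₀ := t₀) ⟨by linarith, by linarith⟩
    (fun s hs => ⟨hu.hasDerivAt_comp_ofReal (hball s hs), (hu _ (hball s hs)).2⟩)
    (fun s _ => ⟨hγ s, hγS s⟩) h ?_
  rwa [← Real.ball_eq_Ioo, Metric.mem_ball, Real.dist_eq]

end IsComplexSolutionOn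

end ComplexSolutions

section Picard

open Metric

variable {E : Type*} [NormedAddCommGroup E] [NormedSpace ℂ E]
  {F : E → E} {p : E} {r M δ : ℝ} {L : NNReal} {u : ℕ → ℂ → E}

/-- Picard iterates `u (n + 1) z = p + ∫₀ᶻ F (u n w) dw` for the initial value `p`, on the disc
`|z| < δ`, with values in the closed ball of radius `r`; the integrals are recorded through their
derivatives. -/
structure IsPicardSequence (F : E → E) (p : E) (r δ : ℝ) (u : ℕ → ℂ → E) : Prop where
  zero : u 0 = fun _ => p
  apply_zero : ∀ n, u n 0 = p
  mapsTo : ∀ n, MapsTo (u n) (ball 0 δ) (closedBall p r)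
  hasDerivAt : ∀ n, ∀ z ∈ ball (0 : ℂ) δ, HasDerivAt (u (n + 1)) (F (u n z)) z

lemma norm_sub_le_of_hasDerivAt_ball {f f' : ℂ → E} {C : ℝ}
    (hf : ∀ z ∈ ball (0 : ℂ) δ, HasDerivAt f (f' z) z) (hC : ∀ z ∈ ball (0 : ℂ) δ, ‖f' z‖ ≤ C)
    {z : ℂ} (hz : z ∈ ball (0 : ℂ) δ) : ‖f z - f 0‖ ≤ C * δ := by
  have hδ : 0 < δ := pos_of_mem_ball hz
  have hC₀ : 0 ≤ C := (norm_nonneg _).trans (hC z hz)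
  calc ‖f z - f 0‖ ≤ C * ‖z - 0‖ :=
        (convex_ball (0 : ℂ) δ).norm_image_sub_le_of_norm_hasDerivWithin_le
          (fun w hw => (hf w hw).hasDerivWithinAt) hC (mem_ball_self hδ) hz
    _ ≤ C * δ := by
        gcongr
        simpa using (mem_ball_zero_iff.1 hz).le

lemma IsPicardSequence.dist_succ_le (hu : IsPicardSequence F p r δ u)
    (hL : LipschitzOnWith L F (closedBall p r)) (n : ℕ) :
    ∀ z ∈ ball (0 : ℂ) δ, dist (u n z) (u (n + 1) z) ≤ r * (L * δ) ^ n := by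
  induction n with
  | zero =>
    intro z hz
    rw [hu.zero, dist_comm, pow_zero, mul_one]
    exact hu.mapsTo 1 hz
  | succ n ih =>
    intro z hz
    have hderiv_le : ∀ w ∈ ball (0 : ℂ) δ,
        ‖F (u n w) - F (u (n + 1) w)‖ ≤ L * (r * (L * δ) ^ n) := fun w hw => by
      rw [← dist_eq_norm]
      exact (hL.dist_le_mul _ (hu.mapsTo n hw) _ (hu.mapsTo (n + 1) hw)).trans
        (mul_le_mul_of_nonneg_left (ih w hw) L.coe_nonneg)
    have hmean := norm_sub_le_of_hasDerivAt_ball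
      (fun w hw => (hu.hasDerivAt n w hw).sub (hu.hasDerivAt (n + 1) w hw)) hderiv_le hz
    simp only [Pi.sub_apply, hu.apply_zero, sub_self, sub_zero] at hmean
    calc dist (u (n + 1) z) (u (n + 2) z) ≤ L * (r * (L * δ) ^ n) * δ := by
          rwa [dist_eq_norm]
      _ = r * (L * δ) ^ (n + 1) := by ring

theorem exists_isPicardSequence [CompleteSpace E] (hF : DifferentiableOn ℂ F (closedBall p r))
    (hM : ∀ x ∈ closedBall p r, ‖F x‖ ≤ M) (hr : 0 ≤ r) (hMδ : M * δ ≤ r) :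
    ∃ u, IsPicardSequence F p r δ u := by
  let Admissible (f : ℂ → E) : Prop :=
    f 0 = p ∧ DifferentiableOn ℂ f (ball 0 δ) ∧ MapsTo f (ball 0 δ) (closedBall p r)
  have hnext : ∀ f : {f // Admissible f}, ∃ g : {g // Admissible g},
      ∀ z ∈ ball (0 : ℂ) δ, HasDerivAt g.1 (F (f.1 z)) z := by
    rintro ⟨f, -, hfd, hfr⟩
    obtain ⟨g, hg0, hg⟩ := (hF.comp hfd hfr).isExactOn_ball.with_val_at 0 p
    refine ⟨⟨g, hg0, fun z hz => (hg z hz).differentiableAt.differentiableWithinAt,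
      fun z hz => mem_closedBall_iff_norm.2 ?_⟩, hg⟩
    rw [← hg0]
    exact (norm_sub_le_of_hasDerivAt_ball hg (fun w hw => hM _ (hfr hw)) hz).trans hMδ
  choose next hnext using hnext
  let start : {f // Admissible f} :=
    ⟨fun _ => p, rfl, differentiableOn_const p, fun _ _ => mem_closedBall_self hr⟩
  refine ⟨fun n => (next^[n] start).1, rfl, fun n => (next^[n] start).2.1,
    fun n => (next^[n] start).2.2.2, fun n => ?_⟩
  rw [Function.iterate_succ_apply']
  exact hnext _

theorem exists_isComplexSolutionOn_ball [CompleteSpace E]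
    (hF : DifferentiableOn ℂ F (closedBall p r))
    (hL : LipschitzOnWith L F (closedBall p r)) (hM : ∀ x ∈ closedBall p r, ‖F x‖ ≤ M)
    (hr : 0 ≤ r) (hδ : 0 < δ) (hMδ : M * δ ≤ r) (hLδ : L * δ < 1) :
    ∃ φ : ℂ → E, φ 0 = p ∧ IsComplexSolutionOn F (closedBall p r) φ (ball 0 δ) := by
  obtain ⟨u, hu⟩ := exists_isPicardSequence hF hM hr hMδ
  obtain ⟨φ, hφ⟩ := exists_tendstoUniformlyOn_of_dist_le_geometric (by positivity) hLδ
    (hu.dist_succ_le hL)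
  have hφr : ∀ z ∈ ball (0 : ℂ) δ, φ z ∈ closedBall p r := fun z hz =>
    isClosed_closedBall.mem_of_tendsto (hφ.tendsto_at hz) (.of_forall fun n => hu.mapsTo n hz)
  have hderiv : TendstoUniformlyOn (fun n z => F (u n z)) (fun z => F (φ z)) atTop (ball 0 δ) :=
    hL.uniformContinuousOn.comp_tendstoUniformlyOn_eventually
      (.of_forall fun n z hz => hu.mapsTo n hz) hφr hφ
  refine ⟨φ, tendsto_nhds_unique (hφ.tendsto_at (mem_ball_self hδ)) ?_, fun z hz =>
    ⟨hasDerivAt_of_tendstoUniformlyOn (f := fun n => u (n + 1)) isOpen_ball hderiv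
      (.of_forall hu.hasDerivAt) (fun w hw => (tendsto_add_atTop_iff_nat 1).2 (hφ.tendsto_at hw))
      hz, hφr z hz⟩⟩
  simp only [hu.apply_zero]
  exact tendsto_const_nhds

theorem exists_uniform_isComplexSolutionOn_ball [ProperSpace E] {U K : Set E} (hU : IsOpen U)
    (hF : ContDiffOn ℂ 1 F U) (hK : IsCompact K) (hKU : K ⊆ U) :
    ∃ S, Bornology.IsBounded S ∧ K ⊆ S ∧ ∃ L : NNReal, LipschitzOnWith L F S ∧
      ∃ δ > 0, ∀ p ∈ K, ∃ φ : ℂ → E, φ 0 = p ∧ IsComplexSolutionOn F S φ (ball 0 δ) := by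
  obtain ⟨r, hr, hrU⟩ := hK.exists_cthickening_subset_open hU hKU
  have hS : IsCompact (cthickening r K) := hK.cthickening
  obtain ⟨L, hL⟩ := exists_lipschitzOnWith_of_contDiffOn hF hU hS hrU
  obtain ⟨M, hM⟩ := hS.exists_bound_of_continuousOn hL.continuousOn
  have hsmall : ∀ᶠ δ : ℝ in 𝓝[>] 0, M * δ ≤ r ∧ L * δ < 1 := by
    refine nhdsWithin_le_nhds ?_
    have hMδ : ∀ᶠ δ : ℝ in 𝓝 0, M * δ < r :=
      (by fun_prop : Continuous fun δ : ℝ => M * δ).continuousAt.eventually_lt_const (by simpa)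
    have hLδ : ∀ᶠ δ : ℝ in 𝓝 0, L * δ < 1 :=
      (by fun_prop : Continuous fun δ : ℝ => L * δ).continuousAt.eventually_lt_const (by simp)
    exact hMδ.mp (hLδ.mono fun δ h₂ h₁ => ⟨h₁.le, h₂⟩)
  obtain ⟨δ, ⟨hMδ, hLδ⟩, hδ⟩ := (hsmall.and eventually_mem_nhdsWithin).exists
  refine ⟨cthickening r K, hS.isBounded, self_subset_cthickening K, L, hL, δ, hδ, fun p hp => ?_⟩
  have hball : closedBall p r ⊆ cthickening r K := closedBall_subset_cthickening hp r
  obtain ⟨φ, hφ₀, hφ⟩ := exists_isComplexSolutionOn_ball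
    ((hF.differentiableOn one_ne_zero).mono (hball.trans hrU)) (hL.mono hball)
    (fun x hx => hM x (hball hx)) hr.le hδ hMδ hLδ
  exact ⟨φ, hφ₀, hφ.mono_region hball⟩

end Picard

section Strip

/-- The open strip `|Im z| < δ`. -/
def horizontalStrip (δ : ℝ) : Set ℂ := Complex.im ⁻¹' Metric.ball 0 δ

lemma mem_horizontalStrip {δ : ℝ} {z : ℂ} : z ∈ horizontalStrip δ ↔ |z.im| < δ :=
  mem_ball_zero_iff

lemma isOpen_horizontalStrip (δ : ℝ) : IsOpen (horizontalStrip δ) :=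
  Metric.isOpen_ball.preimage Complex.continuous_im

lemma convex_horizontalStrip (δ : ℝ) : Convex ℝ (horizontalStrip δ) :=
  (convex_ball 0 δ).linear_preimage Complex.imLm

lemma apply_sub_mul_eq_of_periodic {X : Type*} {f : ℂ → X} {τ : ℂ}
    (hper : ∀ z ∈ horizontalStrip |τ.im|, z + τ ∈ horizontalStrip |τ.im| → f (z + τ) = f z)
    {j k : ℤ} {z : ℂ} (hj : z - j * τ ∈ horizontalStrip |τ.im|)
    (hk : z - k * τ ∈ horizontalStrip |τ.im|) : f (z - j * τ) = f (z - k * τ) := by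
  wlog hjk : j ≤ k generalizing j k
  · exact (this hk hj (le_of_not_ge hjk)).symm
  have hstep : k < j + 2 := by
    have him : ((k - j : ℤ) : ℝ) * τ.im = (z - j * τ).im - (z - k * τ).im := by
      simp; ring
    have hlt : |((k - j : ℤ) : ℝ)| * |τ.im| < 2 * |τ.im| := by
      rw [← abs_mul, him, two_mul]
      exact (abs_sub _ _).trans_lt
        (add_lt_add (mem_horizontalStrip.1 hj) (mem_horizontalStrip.1 hk))
    have := (le_abs_self _).trans_lt (lt_of_mul_lt_mul_right hlt (abs_nonneg _))
    have : k - j < 2 := by exact_mod_cast this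
    omega
  obtain rfl | rfl : k = j ∨ k = j + 1 := by omega
  · rfl
  · have hshift : z - j * τ = z - (j + 1 : ℤ) * τ + τ := by push_cast; ring
    rw [hshift] at hj ⊢
    exact hper _ hk hj

variable {E : Type*} [NormedAddCommGroup E] [NormedSpace ℂ E]

theorem exists_isComplexSolutionOn_strip [CompleteSpace E] {F : E → E} {S : Set E} {L : NNReal}
    (hL : LipschitzOnWith L F S) {γ : ℝ → E} (hγ : ∀ t, HasDerivAt γ (F (γ t)) t)
    (hγS : ∀ t, γ t ∈ S) {δ : ℝ} (hδ : 0 < δ)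
    (hlocal : ∀ t, ∃ φ : ℂ → E, φ 0 = γ t ∧ IsComplexSolutionOn F S φ (Metric.ball 0 δ)) :
    ∃ Γ : ℂ → E, (∀ t : ℝ, Γ t = γ t) ∧ IsComplexSolutionOn F S Γ (horizontalStrip δ) := by
  have hcentred : ∀ t : ℝ, ∃ ψ : ℂ → E,
      ψ t = γ t ∧ IsComplexSolutionOn F S ψ (Metric.ball t δ) := fun t => by
    obtain ⟨φ, hφ₀, hφ⟩ := hlocal t
    refine ⟨fun z => φ (z + -t), by simpa using hφ₀, (hφ.comp_add_const (-t)).mono_domain ?_⟩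
    intro z hz
    simpa [dist_eq_norm, sub_eq_add_neg] using hz
  choose ψ hψ₀ hψ using hcentred
  have hreal : ∀ t s : ℝ, |s - t| < δ → ψ t s = γ s := fun t s hs =>
    (hψ t).apply_eq_of_real_solution hL hγ hγS (hψ₀ t) hs
  have hcompat : ∀ s t : ℝ, EqOn (ψ s) (ψ t) (Metric.ball (s : ℂ) δ ∩ Metric.ball (t : ℂ) δ) := by
    rintro s t z ⟨hzs, hzt⟩
    have hclose : |s - t| < 2 * δ := by
      rw [← Real.dist_eq, ← Complex.isometry_ofReal.dist_eq, two_mul]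
      exact (dist_triangle_left _ _ z).trans_lt (add_lt_add hzs hzt)
    have hs : |(s + t) / 2 - s| < δ := by rw [abs_lt] at *; constructor <;> linarith
    have ht : |(s + t) / 2 - t| < δ := by rw [abs_lt] at *; constructor <;> linarith
    refine ((hψ s).mono_domain inter_subset_left).eqOn_of_isPreconnected hL
      (Metric.isOpen_ball.inter Metric.isOpen_ball)
      ((convex_ball _ _).inter (convex_ball _ _)).isPreconnected
      ((hψ t).mono_domain inter_subset_right) (z₀ := ((s + t) / 2 : ℝ)) ⟨?_, ?_⟩
      ((hreal s _ hs).trans (hreal t _ ht).symm) ⟨hzs, hzt⟩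
    · rwa [Metric.mem_ball, Complex.isometry_ofReal.dist_eq]
    · rwa [Metric.mem_ball, Complex.isometry_ofReal.dist_eq]
  obtain ⟨Γ, hΓ⟩ := exists_eqOn_of_eqOn_inter hcompat
  refine ⟨Γ, fun t => (hΓ t (Metric.mem_ball_self hδ)).trans (hψ₀ t), fun z hz => ?_⟩
  refine (hψ z.re).congr Metric.isOpen_ball (hΓ z.re) z ?_
  rwa [Metric.mem_ball, Complex.dist_of_re_eq (by simp), Complex.ofReal_im, Real.dist_eq, sub_zero,
    ← mem_horizontalStrip]

lemma IsComplexSolutionOn.apply_add_eq_of_apply_add_eq [CompleteSpace E] {F : E → E} {S : Set E}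
    {L : NNReal} {u : ℂ → E} {δ : ℝ} (hu : IsComplexSolutionOn F S u (horizontalStrip δ))
    (hL : LipschitzOnWith L F S) {τ z₀ z : ℂ} (hz₀ : z₀ ∈ horizontalStrip δ)
    (hz₀τ : z₀ + τ ∈ horizontalStrip δ) (h : u (z₀ + τ) = u z₀) (hz : z ∈ horizontalStrip δ)
    (hzτ : z + τ ∈ horizontalStrip δ) : u (z + τ) = u z :=
  ((hu.comp_add_const τ).mono_domain inter_subset_right).eqOn_of_isPreconnected hL
    ((isOpen_horizontalStrip δ).inter ((isOpen_horizontalStrip δ).preimage (by fun_prop)))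
    ((convex_horizontalStrip δ).inter
      ((convex_horizontalStrip δ).translate_preimage_left τ)).isPreconnected
    (hu.mono_domain inter_subset_left) ⟨hz₀, hz₀τ⟩ h ⟨hz, hzτ⟩

theorem exists_differentiable_extension_of_periodic {f : ℂ → E} {τ : ℂ} (hτ : τ.im ≠ 0)
    (hf : DifferentiableOn ℂ f (horizontalStrip |τ.im|))
    (hper : ∀ z ∈ horizontalStrip |τ.im|, z + τ ∈ horizontalStrip |τ.im| → f (z + τ) = f z) :
    ∃ g : ℂ → E, Differentiable ℂ g ∧ EqOn g f (horizontalStrip |τ.im|) ∧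
      range g ⊆ f '' horizontalStrip |τ.im| := by
  let D : ℤ → Set ℂ := fun k => (fun z => z - k * τ) ⁻¹' horizontalStrip |τ.im|
  obtain ⟨g, hg⟩ := exists_eqOn_of_eqOn_inter (D := D) (f := fun k z => f (z - k * τ))
    fun j k z hz => apply_sub_mul_eq_of_periodic hper hz.1 hz.2
  have hcover : ∀ z, ∃ k, z ∈ D k := fun z => by
    refine ⟨round (z.im / τ.im), mem_horizontalStrip.2 ?_⟩
    have him : (z - round (z.im / τ.im) * τ).im = (z.im / τ.im - round (z.im / τ.im)) * τ.im := by
      rw [sub_mul, div_mul_cancel₀ _ hτ]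
      simp
    rw [him, abs_mul]
    have := abs_sub_round (z.im / τ.im)
    nlinarith [abs_pos.2 hτ]
  refine ⟨g, fun z => ?_, fun z hz => ?_, ?_⟩
  · obtain ⟨k, hk⟩ := hcover z
    have hDk : IsOpen (D k) := (isOpen_horizontalStrip _).preimage (by fun_prop)
    have hfk : DifferentiableAt ℂ (fun w => f (w - k * τ)) z :=
      (hf.differentiableAt ((isOpen_horizontalStrip _).mem_nhds hk)).comp z (by fun_prop)
    exact hfk.congr_of_eventuallyEq ((hg k).eventuallyEq_of_mem (hDk.mem_nhds hk))
  · simpa using hg 0 (show z ∈ D 0 by simpa [D] using hz)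
  · rintro _ ⟨z, rfl⟩
    obtain ⟨k, hk⟩ := hcover z
    exact ⟨_, hk, (hg k hk).symm⟩

theorem apply_eq_apply_of_periodic_of_isBounded {f : ℂ → E} {τ : ℂ} (hτ : τ.im ≠ 0)
    (hf : DifferentiableOn ℂ f (horizontalStrip |τ.im|))
    (hper : ∀ z ∈ horizontalStrip |τ.im|, z + τ ∈ horizontalStrip |τ.im| → f (z + τ) = f z)
    (hbdd : Bornology.IsBounded (f '' horizontalStrip |τ.im|)) {z w : ℂ}
    (hz : z ∈ horizontalStrip |τ.im|) (hw : w ∈ horizontalStrip |τ.im|) : f z = f w := by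
  obtain ⟨g, hg, hgf, hrange⟩ := exists_differentiable_extension_of_periodic hτ hf hper
  rw [← hgf hz, ← hgf hw]
  exact hg.apply_eq_apply_of_bounded (hbdd.subset hrange) z w

end Strip

section PlanarFlow

variable {F : ℂ → ℂ} {S : Set ℂ} {L : NNReal} {γ : ℝ → ℂ} {Γ : ℂ → ℂ} {δ : ℝ}

lemma eqOn_translate_of_apply_eq (hL : LipschitzOnWith L F S)
    (hΓ : IsComplexSolutionOn F S Γ (horizontalStrip δ)) {φ : ℂ → ℂ}
    (hφ : IsComplexSolutionOn F S φ (Metric.ball 0 (δ / 2))) {t : ℝ} {a : ℂ}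
    (ha : a ∈ Metric.ball 0 (δ / 2)) (h : φ a = Γ t) :
    EqOn (fun z => Γ (z + (t - a))) φ (Metric.ball 0 (δ / 2)) := by
  refine ((hΓ.comp_add_const (t - a)).mono_domain fun z hz => ?_).eqOn_of_isPreconnected hL
    Metric.isOpen_ball (convex_ball _ _).isPreconnected hφ ha (by simp [h])
  rw [mem_ball_zero_iff] at ha hz
  have := (abs_sub z.im a.im).trans
    (add_le_add (Complex.abs_im_le_norm z) (Complex.abs_im_le_norm a))
  rw [mem_preimage, mem_horizontalStrip]
  simp only [Complex.add_im, Complex.sub_im, Complex.ofReal_im, zero_sub, ← sub_eq_add_neg]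
  linarith

lemma image_ball_mem_nhds {φ : ℂ → ℂ} (hφ : IsComplexSolutionOn F S φ (Metric.ball 0 δ))
    (hδ : 0 < δ) (hF : F (φ 0) ≠ 0) : φ '' Metric.ball 0 δ ∈ 𝓝 (φ 0) := by
  have hball : Metric.ball (0 : ℂ) δ ∈ 𝓝 0 := Metric.ball_mem_nhds 0 hδ
  have hstrict := (hφ.differentiableOn.analyticAt hball).hasStrictDerivAt
  rw [(hφ 0 (Metric.mem_ball_self hδ)).1.deriv] at hstrict
  rw [← hstrict.map_nhds_eq hF]
  exact image_mem_map hball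

theorem exists_period_of_mapClusterPt (hL : LipschitzOnWith L F S)
    (hΓ : IsComplexSolutionOn F S Γ (horizontalStrip δ)) (hδ : 0 < δ) {φ : ℂ → ℂ}
    (hφ : IsComplexSolutionOn F S φ (Metric.ball 0 δ)) (hF : F (φ 0) ≠ 0)
    (hcluster : MapClusterPt (φ 0) atTop fun t : ℝ => Γ t) :
    ∃ τ : ℂ, 0 < τ.re ∧ |τ.im| < δ ∧
      ∀ z ∈ horizontalStrip δ, z + τ ∈ horizontalStrip δ → Γ (z + τ) = Γ z := by
  replace hφ := hφ.mono_domain (Metric.ball_subset_ball (half_le_self hδ.le))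
  have hreturns := hcluster.frequently (image_ball_mem_nhds hφ (half_pos hδ) hF)
  obtain ⟨t₁, a₁, ha₁, h₁⟩ := hreturns.exists
  obtain ⟨t₂, ⟨a₂, ha₂, h₂⟩, ht⟩ := (hreturns.and_eventually (eventually_ge_atTop (t₁ + δ))).exists
  have hmeet : ∀ (t : ℝ) {a : ℂ}, a ∈ Metric.ball 0 (δ / 2) → φ a = Γ t → Γ (t - a) = φ 0 :=
    fun t a ha h => by
      simpa using eqOn_translate_of_apply_eq hL hΓ hφ ha h (Metric.mem_ball_self (half_pos hδ))
  have hshift : (t₁ - a₁ : ℂ) + ((t₂ - a₂) - (t₁ - a₁)) = t₂ - a₂ := add_sub_cancel _ _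
  rw [mem_ball_zero_iff] at ha₁ ha₂
  have hre₁ := abs_lt.1 ((Complex.abs_re_le_norm a₁).trans_lt ha₁)
  have hre₂ := abs_lt.1 ((Complex.abs_re_le_norm a₂).trans_lt ha₂)
  have him₁ := abs_lt.1 ((Complex.abs_im_le_norm a₁).trans_lt ha₁)
  have him₂ := abs_lt.1 ((Complex.abs_im_le_norm a₂).trans_lt ha₂)
  refine ⟨(t₂ - a₂) - (t₁ - a₁), ?_, ?_,
    fun z => hΓ.apply_add_eq_of_apply_add_eq hL (z₀ := t₁ - a₁) ?_ ?_ ?_⟩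
  · simp only [Complex.sub_re, Complex.ofReal_re]
    linarith
  · simp only [Complex.sub_im, Complex.ofReal_im]
    exact abs_lt.2 ⟨by linarith, by linarith⟩
  · simp only [mem_horizontalStrip, Complex.sub_im, Complex.ofReal_im]
    exact abs_lt.2 ⟨by linarith, by linarith⟩
  · simp only [hshift, mem_horizontalStrip, Complex.sub_im, Complex.ofReal_im]
    exact abs_lt.2 ⟨by linarith, by linarith⟩
  · rw [hshift, hmeet t₂ (mem_ball_zero_iff.2 ha₂) h₂, hmeet t₁ (mem_ball_zero_iff.2 ha₁) h₁]

lemma exists_real_period_of_period (hS : Bornology.IsBounded S)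
    (hΓ : IsComplexSolutionOn F S Γ (horizontalStrip δ)) {τ : ℂ} (hre : 0 < τ.re)
    (him : |τ.im| < δ)
    (hper : ∀ z ∈ horizontalStrip δ, z + τ ∈ horizontalStrip δ → Γ (z + τ) = Γ z) :
    ∃ T > 0, ∀ t : ℝ, Γ ↑(t + T) = Γ t := by
  by_cases hτ : τ.im = 0
  · have hreal : ((τ.re : ℝ) : ℂ) = τ := Complex.ext rfl hτ.symm
    refine ⟨τ.re, hre, fun t => ?_⟩
    have hδ : 0 < δ := (abs_nonneg _).trans_lt him
    rw [Complex.ofReal_add, hreal]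
    exact hper t (mem_horizontalStrip.2 (by simpa)) (mem_horizontalStrip.2 (by simpa [hτ]))
  · have hsub : horizontalStrip |τ.im| ⊆ horizontalStrip δ :=
      preimage_mono (Metric.ball_subset_ball him.le)
    have hline : ∀ t : ℝ, (t : ℂ) ∈ horizontalStrip |τ.im| := fun t =>
      mem_horizontalStrip.2 (by simpa)
    exact ⟨1, one_pos, fun t => apply_eq_apply_of_periodic_of_isBounded hτ
      (hΓ.differentiableOn.mono hsub) (fun z hz hzτ => hper z (hsub hz) (hsub hzτ))
      (hS.subset (image_subset_iff.2 fun z hz => (hΓ z (hsub hz)).2)) (hline _) (hline _)⟩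

theorem apply_eq_zero_of_mapClusterPt {U K : Set ℂ} (hU : IsOpen U) (hF : DifferentiableOn ℂ F U)
    (hK : IsCompact K) (hKU : K ⊆ U) (hγ : ∀ t, HasDerivAt γ (F (γ t)) t) (hγK : ∀ t, γ t ∈ K)
    (hnp : ¬ ∃ T > 0, ∀ t : ℝ, γ (t + T) = γ t) {p : ℂ} (hp : MapClusterPt p atTop γ) :
    F p = 0 := by
  by_contra hFp
  obtain ⟨S, hS, hKS, L, hL, δ, hδ, hlocal⟩ :=
    exists_uniform_isComplexSolutionOn_ball hU (hF.contDiffOn hU) hK hKU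
  obtain ⟨Γ, hΓγ, hΓ⟩ := exists_isComplexSolutionOn_strip hL hγ (fun t => hKS (hγK t)) hδ
    fun t => hlocal _ (hγK t)
  obtain ⟨φ, rfl, hφ⟩ := hlocal p (hK.isClosed.mem_of_mapClusterPt hp (.of_forall hγK))
  obtain ⟨τ, hre, him, hper⟩ := exists_period_of_mapClusterPt hL hΓ hδ hφ hFp (by simpa only [hΓγ])
  obtain ⟨T, hT, h⟩ := exists_real_period_of_period hS hΓ hre him hper
  exact hnp ⟨T, hT, fun t => by simpa only [hΓγ] using h t⟩

theorem exists_tendsto_atTop_of_not_periodic {U K : Set ℂ} (hU : IsOpen U)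
    (hF : DifferentiableOn ℂ F U) (hK : IsCompact K) (hKU : K ⊆ U)
    (hγ : ∀ t, HasDerivAt γ (F (γ t)) t) (hγK : ∀ t, γ t ∈ K)
    (hnp : ¬ ∃ T > 0, ∀ t : ℝ, γ (t + T) = γ t) : ∃ a, F a = 0 ∧ Tendsto γ atTop (𝓝 a) := by
  have hzero : ∀ q, MapClusterPt q atTop γ → F q = 0 := fun q =>
    apply_eq_zero_of_mapClusterPt hU hF hK hKU hγ hγK hnp
  obtain ⟨a, haK, ha⟩ :=
    hK.exists_mapClusterPt_of_frequently (Eventually.frequently (.of_forall hγK) : ∃ᶠ t in atTop, _)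
  refine ⟨a, hzero a ha, ?_⟩
  obtain hF₀ | hF₀ :=
    (hF.analyticAt (hU.mem_nhds (hKU haK))).eventually_eq_zero_or_eventually_ne_zero
  · obtain ⟨t₀, ht₀⟩ := (ha.frequently hF₀).exists
    obtain ⟨L, hL⟩ := exists_lipschitzOnWith_of_contDiffOn (hF.contDiffOn hU) hU hK hKU
    have hconst := eq_of_apply_eq_zero hL hγ hγK ht₀
    exact (hnp ⟨1, one_pos, fun t => (hconst _).trans (hconst t).symm⟩).elim
  · have hcont : Continuous γ := continuous_iff_continuousAt.2 fun t => (hγ t).continuousAt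
    exact tendsto_of_mapClusterPt_of_isolated hcont hK hγK ha
      (hF₀.mono fun q hq hcluster => hq (hzero q hcluster))

end PlanarFlow

theorem stmt_16_general {U K : Set ℂ} {F : ℂ → ℂ} {γ : ℝ → ℂ} (hU : IsOpen U)
    (hF : DifferentiableOn ℂ F U) (hK : IsCompact K) (hKU : K ⊆ U)
    (hγ : ∀ t, HasDerivAt γ (F (γ t)) t) (hγK : ∀ t, γ t ∈ K)
    (hnp : ¬ ∃ T > 0, ∀ t : ℝ, γ (t + T) = γ t) :
    ∃ a b : ℂ, F a = 0 ∧ F b = 0 ∧ Tendsto γ atTop (𝓝 a) ∧ Tendsto γ atBot (𝓝 b) := by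
  have hγ_reversed : ∀ t, HasDerivAt (fun s => γ (-s)) ((-F) (γ (-t))) t := fun t => by
    simpa [Function.comp_def] using (hγ (-t)).scomp t (hasDerivAt_neg t)
  have hnp_reversed : ¬ ∃ T > 0, ∀ t : ℝ, γ (-(t + T)) = γ (-t) := by
    rintro ⟨T, hT, h⟩
    exact hnp ⟨T, hT, fun t => by simpa using (h (-(t + T))).symm⟩
  obtain ⟨a, ha, hγa⟩ := exists_tendsto_atTop_of_not_periodic hU hF hK hKU hγ hγK hnp
  obtain ⟨b, hb, hγb⟩ := exists_tendsto_atTop_of_not_periodic hU hF.neg hK hKU hγ_reversed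
    (fun t => hγK (-t)) hnp_reversed
  refine ⟨a, b, ha, neg_eq_zero.1 hb, hγa, ?_⟩
  simpa [Function.comp_def] using hγb.comp tendsto_neg_atBot_atTop

/-- bounded non-periodic orbits of an entire holomorphic flow are homoclinic
or heteroclinic: they tend to equilibria in both time directions. -/
theorem stmt_16 (F : ℂ → ℂ) (hF : Differentiable ℂ F) (hF0 : ∃ z : ℂ, F z ≠ 0)
    (γ : ℝ → ℂ) (hγ : ∀ t : ℝ, HasDerivAt γ (F (γ t)) t)
    (hbd : Bornology.IsBounded (Set.range γ))
    (hnp : ¬ ∃ T > 0, ∀ t : ℝ, γ (t + T) = γ t) :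
    ∃ a b : ℂ, F a = 0 ∧ F b = 0 ∧
      Tendsto γ atTop (nhds a) ∧ Tendsto γ atBot (nhds b) :=
  stmt_16_general isOpen_univ hF.differentiableOn hbd.isCompact_closure (subset_univ _) hγ
    (fun t => subset_closure ⟨t, rfl⟩) hnp
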